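/- Let σ : A* → A* be a primitive substitution on a d-letter alphabet, prolongable on the letter a, whose incidence matrix has all entries strictly positive; let y = σ^ω(a), let φ : A* → B* be a coding, and let x = φ(y). Set K = (4K_σ³)^{|σ|·K_σ² + 1}·(K_σ + 1)^{K_σ²}. Define prefixes (w_n)_{n≥1} of x by w_1 = x_0 (the first letter of x) and w_{n+1} = Θ_{x,w_n}(c_n)·w_n, where c_n is the first letter of the derived sequence D_{w_n}(x). Then x is periodic if and only if there exists i ≤ K such that #ℛ_{x,w_i} = 1. -/

import Mathlib

/-!
Write `S = |σ|`, `R = R_σ`, `K = S² R ≤ K_σ` and `x = φ(y)`.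

*Linear recurrence.* As every letter occurs in every `σ(c)`, the lengths of the words `σᵏ(c)` are
comparable. A factor of `y` of length `g + 1` lies in two consecutive tiles `σᵏ(yᵢ)` at a suitable
level `k`, and two-letter words recur within `R`, so the factor occurs in every window of `K g`
positions (`factor_recurs`). Hence in `x`, two occurrences at a distance `g` of a word of length
at least `K g` would put every factor of length `g + 1` inside a `g`-periodic stretch, and `x`
would have the period `g` (`IsLeastPeriod.lt_mul`).

*Return words to prefixes.* Once a prefix is at least as long as the least period `p` of `x`, it
has a single return word (`returnWords_of_le`); conversely a prefix with a single return word
makes `x` periodic (`periodic_of_ncard`). As long as the length of `w_n` is below `p`, linear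
recurrence makes each `w_n` longer than the preceding one by a factor `1 + 1 / K`, so the length
doubles every `K` steps (`wSeq_length`). It therefore suffices to bound `log p`.

*Bounding the least period.* Suppose `|σᵏ| < p`. The tiles `σ^(k+1)(yᵢ)` contain occurrences, called
marks, of the image under `φ` of a longest word `σᵏ(b)`; by linear recurrence there are at most
`S K` of them per tile, and their positions in a tile depend only on this tile and the next one.
The combinatorial pattern formed by the words between consecutive marks (how many start in a tile
of a given kind, and which of them are equal) is thus one of finitely many, whose number depends
only on `S`, `K` and the size of the alphabet. Suppose that two levels, the scale of one being
`2 S K` times the scale of the other, have the same pattern. The period `p` shifts the marks of the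
coarse level by some number `ν` of ranks, so the sequence of coarse words is `ν`-periodic; so is
then the sequence of fine words, and `x` has as a period the total length of `ν` fine words. But
coarse marks are so far apart that `ν` fine words are shorter than `p`, a contradiction
(`MarkedTiling.state_ne`). By the pigeonhole principle there are few well-separated levels with
`|σᵏ| < p`, and this bounds `p` (`le_two_pow`).
-/

namespace Rauzy

variable {A B Γ : Type*}

/-- The factor `x_[i, i+n)` of length `n` of the sequence `x`, starting at position `i`. -/
def factorAt (x : ℕ → A) (i n : ℕ) : List A :=
  (List.range n).map fun k => x (i + k)

/-- The word `w` occurs in the sequence `x` at position `i`. -/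
def OccursAt (x : ℕ → A) (w : List A) (i : ℕ) : Prop :=
  factorAt x i w.length = w

/-- The word `w` is a factor of the sequence `x`. -/
def IsFactor (x : ℕ → A) (w : List A) : Prop :=
  ∃ i, OccursAt x w i

/-- The word `w` is a prefix of the sequence `x`. -/
def IsPrefixSeq (x : ℕ → A) (w : List A) : Prop :=
  OccursAt x w 0

/-- The sequence `x` is uniformly recurrent: every factor occurs with bounded gaps. -/
def UniformlyRecurrent (x : ℕ → A) : Prop :=
  ∀ w : List A, IsFactor x w → ∃ N, ∀ i, ∃ j, i ≤ j ∧ j < i + N ∧ OccursAt x w j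

/-- `i < j` are two successive occurrences of `u` in `x`. -/
def SuccessiveOccs (x : ℕ → A) (u : List A) (i j : ℕ) : Prop :=
  i < j ∧ OccursAt x u i ∧ OccursAt x u j ∧ ∀ k, i < k → k < j → ¬ OccursAt x u k

/-- The word `w` is a return word to `u` in `x`. -/
def IsReturnWord (x : ℕ → A) (u w : List A) : Prop :=
  ∃ i j, SuccessiveOccs x u i j ∧ w = factorAt x i (j - i)

/-- The set `ℛ_{x,u}` of return words to `u` in `x`. -/
def returnWords (x : ℕ → A) (u : List A) : Set (List A) :=
  {w | IsReturnWord x u w}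

/-- The next occurrence of `u` in `x` strictly after position `i`. -/
noncomputable def nextOcc (x : ℕ → A) (u : List A) (i : ℕ) : ℕ :=
  sInf {j | i < j ∧ OccursAt x u j}

/-- The increasing enumeration of the occurrences of the prefix `u` in `x`
(position `0` is an occurrence since `u` is a prefix). -/
noncomputable def occSeq (x : ℕ → A) (u : List A) : ℕ → ℕ
  | 0 => 0
  | n + 1 => nextOcc x u (occSeq x u n)

/-- The `n`-th return word `mₙ` in the decomposition `x = m₀m₁m₂⋯` of `x`
into return words to the prefix `u`. -/
noncomputable def retWord (x : ℕ → A) (u : List A) (n : ℕ) : List A :=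
  factorAt x (occSeq x u n) (occSeq x u (n + 1) - occSeq x u n)

/-- The first index `n` such that `mₙ = w` in the decomposition of `x` into
return words to `u`. -/
noncomputable def firstIdx (x : ℕ → A) (u w : List A) : ℕ :=
  sInf {n | retWord x u n = w}

open Classical in
/-- The derived sequence `D_u(x)` of `x` on the prefix `u`, with the return words
labelled `0, 1, 2, …` in the order of their first appearance in the decomposition
`x = m₀m₁m₂⋯` : the label of `mₙ` is the number of distinct return words appearing
strictly before the first occurrence of `mₙ`. -/
noncomputable def derivedSeq (x : ℕ → A) (u : List A) (n : ℕ) : ℕ :=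
  ((Finset.range (firstIdx x u (retWord x u n))).image (retWord x u)).card

/-- The alphabet `R_{x,u} = {0, …, #ℛ_{x,u} - 1} ⊆ ℕ` of the derived sequence. -/
def derivedAlphabet (x : ℕ → A) (u : List A) : Set ℕ :=
  Set.range (derivedSeq x u)

/-- The morphism `Θ_{x,u}` on letters: the return word labelled `k`. -/
noncomputable def thetaLetter (x : ℕ → A) (u : List A) (k : ℕ) : List A :=
  retWord x u (sInf {n | derivedSeq x u n = k})

/-- The canonical extension of a letter-to-word map to a monoid morphism on words. -/
def apply (f : A → List B) (w : List A) : List B :=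
  (w.map f).flatten

/-- The morphism `Θ_{x,u} : R_{x,u}* → A*` on words. -/
noncomputable def theta (x : ℕ → A) (u : List A) (l : List ℕ) : List A :=
  apply (thetaLetter x u) l

/-- `y = f(x)` for an infinite sequence `x`: the image under `f` of every prefix
of `x` is a prefix of `y`. -/
def SeqImage (f : A → List B) (x : ℕ → A) (y : ℕ → B) : Prop :=
  ∀ n, IsPrefixSeq y (apply f (factorAt x 0 n))

/-- The iterate `σⁿ` of a substitution, on letters. -/
def substIter (σ : A → List A) : ℕ → A → List A
  | 0 => fun a => [a]
  | n + 1 => fun a => apply σ (substIter σ n a)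

/-- `σ` is prolongable on the letter `a`: `σ(a) = a·w` with `w` nonempty, and
`|σⁿ(a)| → ∞`. -/
def Prolongable (σ : A → List A) (a : A) : Prop :=
  (∃ w : List A, w ≠ [] ∧ σ a = a :: w) ∧
    Filter.Tendsto (fun n => (substIter σ n a).length) Filter.atTop Filter.atTop

/-- The incidence matrix of a substitution: entry `(i, j)` is the number of
occurrences of the letter `i` in `σ(j)`. -/
def incMatrix [Fintype A] [DecidableEq A] (σ : A → List A) : Matrix A A ℕ :=
  Matrix.of fun i j => (σ j).count i

/-- A substitution is primitive if some power of its incidence matrix has all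
entries strictly positive. -/
def Primitive [Fintype A] [DecidableEq A] (σ : A → List A) : Prop :=
  ∃ k, 0 < k ∧ ∀ i j, 0 < (incMatrix σ ^ k) i j

/-- The sequence `x` is (purely) periodic. -/
def IsPeriodic (x : ℕ → A) : Prop :=
  ∃ p, 0 < p ∧ ∀ n, x (n + p) = x n

/-- The sequence `x` is ultimately periodic. -/
def IsUltimatelyPeriodic (x : ℕ → A) : Prop :=
  ∃ N p, 0 < p ∧ ∀ n, N ≤ n → x (n + p) = x n

/-- `|σ| = max_{a ∈ A} |σ(a)|`. -/
def mSize [Fintype A] (σ : A → List A) : ℕ :=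
  Finset.univ.sup fun a => (σ a).length

/-- `min_{a ∈ A} |σ(a)|`. -/
noncomputable def minSize [Fintype A] [Nonempty A] (σ : A → List A) : ℕ :=
  Finset.univ.inf' Finset.univ_nonempty fun a => (σ a).length

/-- `R_σ`: the maximal difference between two successive occurrences of a word of
length 2 in any fixed point of `σ`. -/
noncomputable def Rconst (σ : A → List A) : ℕ :=
  sSup {r | ∃ x : ℕ → A, SeqImage σ x x ∧
    ∃ w i j, w.length = 2 ∧ SuccessiveOccs x w i j ∧ r = j - i}

/-- `Q_σ = max( max_{0 ≤ n ≤ (d−1)d^d + 1} |σⁿ| / min_{a∈A} |σⁿ(a)| , |σ| )`. -/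
noncomputable def Qconst [Fintype A] [Nonempty A] (σ : A → List A) : ℝ :=
  max
    ((Finset.range ((Fintype.card A - 1) * Fintype.card A ^ Fintype.card A + 2)).sup'
      (Finset.nonempty_range_iff.mpr (by omega))
      fun n => (mSize (substIter σ n) : ℝ) / (minSize (substIter σ n) : ℝ))
    (mSize σ : ℝ)

/-- `K_σ = Q_σ · R_σ · |σ|`. -/
noncomputable def Kconst [Fintype A] [Nonempty A] (σ : A → List A) : ℝ :=
  Qconst σ * Rconst σ * mSize σ

/-- The index `m` such that `occSeq x u m = L`, i.e. the number of complete return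
words to `u` composing the prefix of length `L` of `x`. -/
noncomputable def posIdx (x : ℕ → A) (u : List A) (L : ℕ) : ℕ :=
  sInf {m | occSeq x u m = L}

/-- The return substitution `σ_u : R_{x,u}* → R_{x,u}*`, on letters: it is the unique
substitution satisfying `Θ_{x,u} ∘ σ_u = σ ∘ Θ_{x,u}`. -/
noncomputable def returnSubst (σ : A → List A) (x : ℕ → A) (u : List A) (k : ℕ) : List ℕ :=
  let n := sInf {n | derivedSeq x u n = k}
  let p := posIdx x u (apply σ (factorAt x 0 (occSeq x u n))).length
  let q := posIdx x u (apply σ (factorAt x 0 (occSeq x u (n + 1)))).length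
  (List.range (q - p)).map fun t => derivedSeq x u (p + t)

/-- For a coding `φ`, the morphism `λ_u : R_{x,u}* → R_{φ(x),φ(u)}*`, on letters:
it is the unique morphism satisfying `φ ∘ Θ_{x,u} = Θ_{φ(x),φ(u)} ∘ λ_u`. -/
noncomputable def lambdaMorph (φ : A → B) (x : ℕ → A) (u : List A) (k : ℕ) : List ℕ :=
  let n := sInf {n | derivedSeq x u n = k}
  let p := posIdx (fun i => φ (x i)) (u.map φ) (occSeq x u n)
  let q := posIdx (fun i => φ (x i)) (u.map φ) (occSeq x u (n + 1))
  (List.range (q - p)).map fun t => derivedSeq (fun i => φ (x i)) (u.map φ) (p + t)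

/-- The Parikh vector (abelianization) of a word. -/
def parikh [DecidableEq A] (w : List A) : A → ℤ :=
  fun b => (w.count b : ℤ)

/-- The prefixes `(w_n)_{n ≥ 1}` of `x` defined by `w_1 = x_0` and
`w_{n+1} = Θ_{x,w_n}(c_n)·w_n`, where `c_n` is the first letter of the derived
sequence `D_{w_n}(x)` (here `wSeq x n` is the paper's `w_{n+1}`). -/
noncomputable def wSeq {B : Type*} (x : ℕ → B) : ℕ → List B
  | 0 => [x 0]
  | n + 1 => thetaLetter x (wSeq x n) (derivedSeq x (wSeq x n) 0) ++ wSeq x n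

/-! ### Words and morphisms -/

section Words

theorem length_factorAt (x : ℕ → A) (i n : ℕ) : (factorAt x i n).length = n := by
  simp [factorAt]

theorem factorAt_add (x : ℕ → A) (i m n : ℕ) :
    factorAt x i (m + n) = factorAt x i m ++ factorAt x (i + m) n := by
  simp [factorAt, List.range_add, Function.comp_def, add_assoc]

theorem factorAt_eq_iff {x x' : ℕ → A} {i j n : ℕ} :
    factorAt x i n = factorAt x' j n ↔ ∀ t, t < n → x (i + t) = x' (j + t) := by
  simp [factorAt]

theorem occursAt_factorAt {x : ℕ → A} {i j n : ℕ} :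
    OccursAt x (factorAt x i n) j ↔ ∀ t, t < n → x (j + t) = x (i + t) := by
  rw [OccursAt, length_factorAt, factorAt_eq_iff]

theorem mem_factorAt {x : ℕ → A} {i n : ℕ} {c : A} :
    c ∈ factorAt x i n ↔ ∃ t, t < n ∧ x (i + t) = c := by
  simp [factorAt]

theorem apply_append (f : A → List B) (u v : List A) :
    apply f (u ++ v) = apply f u ++ apply f v := by
  simp [apply]

theorem apply_singleton (f : A → List B) (a : A) : apply f [a] = f a := by
  simp [apply]

theorem apply_apply (f : A → List B) (g : B → List Γ) (w : List A) :
    apply g (apply f w) = apply (fun a => apply g (f a)) w := by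
  induction w with
  | nil => simp [apply]
  | cons a w ih =>
    have h1 : a :: w = [a] ++ w := rfl
    rw [h1, apply_append, apply_append, apply_append, ih, apply_singleton, apply_singleton]

theorem apply_substIter_succ (σ : A → List A) (k : ℕ) (w : List A) :
    apply (substIter σ (k + 1)) w = apply σ (apply (substIter σ k) w) := by
  rw [apply_apply]; rfl

theorem apply_substIter_zero (σ : A → List A) (w : List A) :
    apply (substIter σ 0) w = w := by
  simp only [apply, substIter]
  induction w with
  | nil => rfl
  | cons a w ih => simpa using ih

theorem apply_substIter_succ_right (σ : A → List A) (k : ℕ) (w : List A) :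
    apply (substIter σ (k + 1)) w = apply (substIter σ k) (apply σ w) := by
  induction k with
  | zero => rw [apply_substIter_succ, apply_substIter_zero, apply_substIter_zero]
  | succ k ih => rw [apply_substIter_succ, ih, apply_substIter_succ]

theorem substIter_succ_right (σ : A → List A) (k : ℕ) (c : A) :
    substIter σ (k + 1) c = apply (substIter σ k) (σ c) := by
  have h := apply_substIter_succ_right σ k [c]
  rwa [apply_singleton, apply_singleton] at h

theorem substIter_one (σ : A → List A) (c : A) : substIter σ 1 c = σ c := by
  rw [substIter_succ_right, apply_substIter_zero]

theorem length_apply_le {f : A → List B} {M : ℕ} (h : ∀ a, (f a).length ≤ M) (w : List A) :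
    (apply f w).length ≤ w.length * M := by
  induction w with
  | nil => simp [apply]
  | cons a w ih =>
    have h1 : a :: w = [a] ++ w := rfl
    rw [h1, apply_append, apply_singleton, List.length_append, List.length_append,
      List.length_singleton, add_mul, one_mul]
    exact add_le_add (h a) ih

theorem le_length_apply {f : A → List B} {M : ℕ} (h : ∀ a, M ≤ (f a).length) (w : List A) :
    w.length * M ≤ (apply f w).length := by
  induction w with
  | nil => simp [apply]
  | cons a w ih =>
    have h1 : a :: w = [a] ++ w := rfl
    rw [h1, apply_append, apply_singleton, List.length_append, List.length_append,
      List.length_singleton, add_mul, one_mul]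
    exact add_le_add (h a) ih

theorem length_le_length_apply (f : A → List B) {w : List A} {c : A} (h : c ∈ w) :
    (f c).length ≤ (apply f w).length :=
  (List.sublist_flatten_of_mem (List.mem_map_of_mem h)).length_le

end Words

/-! ### Growth of the iterates -/

section Growth

variable [Fintype A] {σ : A → List A}

theorem length_le_mSize (f : A → List A) (c : A) : (f c).length ≤ mSize f :=
  Finset.le_sup (f := fun a => (f a).length) (Finset.mem_univ c)

theorem exists_length_eq_mSize [Nonempty A] (f : A → List A) :
    ∃ b, (f b).length = mSize f := by
  obtain ⟨b, -, hb⟩ := Finset.exists_mem_eq_sup (Finset.univ : Finset A)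
    Finset.univ_nonempty (fun a => (f a).length)
  exact ⟨b, hb.symm⟩

theorem mSize_zero [Nonempty A] : mSize (substIter σ 0) = 1 := by
  obtain ⟨b, hb⟩ := exists_length_eq_mSize (substIter σ 0)
  rw [← hb]; rfl

theorem mSize_one : mSize (substIter σ 1) = mSize σ := by
  have : substIter σ 1 = σ := funext (substIter_one σ)
  rw [this]

/-- Since `σ(c)` contains every letter, the shortest image under `σ^(k+1)` is at least as
long as the longest one under `σ^k`. -/
theorem mSize_le_length_succ [Nonempty A] (hmem : ∀ c e : A, c ∈ σ e) (k : ℕ) (c : A) :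
    mSize (substIter σ k) ≤ (substIter σ (k + 1) c).length := by
  obtain ⟨b, hb⟩ := exists_length_eq_mSize (substIter σ k)
  rw [← hb, substIter_succ_right]
  exact length_le_length_apply _ (hmem b c)

theorem mSize_succ_le [Nonempty A] (k : ℕ) :
    mSize (substIter σ (k + 1)) ≤ mSize σ * mSize (substIter σ k) := by
  obtain ⟨b, hb⟩ := exists_length_eq_mSize (substIter σ (k + 1))
  rw [← hb, substIter_succ_right]
  exact (length_apply_le (length_le_mSize _) _).trans
    (Nat.mul_le_mul_right _ (length_le_mSize _ _))

theorem two_mul_mSize_le [Nonempty A] (hmem : ∀ c e : A, c ∈ σ e)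
    (h2 : ∀ e, 2 ≤ (σ e).length) (k : ℕ) :
    2 * mSize (substIter σ k) ≤ mSize (substIter σ (k + 2)) := by
  obtain ⟨b⟩ := ‹Nonempty A›
  refine le_trans ?_ (length_le_mSize _ b)
  rw [substIter_succ_right]
  exact (Nat.mul_le_mul_right _ (h2 b)).trans (le_length_apply (mSize_le_length_succ hmem k) _)

theorem pow_mul_mSize_le [Nonempty A] (hmem : ∀ c e : A, c ∈ σ e)
    (h2 : ∀ e, 2 ≤ (σ e).length) (k u : ℕ) :
    2 ^ u * mSize (substIter σ k) ≤ mSize (substIter σ (k + 2 * u)) := by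
  induction u with
  | zero => simp
  | succ u ih =>
    have := two_mul_mSize_le hmem h2 (k + 2 * u)
    have e : k + 2 * (u + 1) = k + 2 * u + 2 := by ring
    rw [e, pow_succ]; nlinarith

theorem mSize_le_pow [Nonempty A] (k : ℕ) : mSize (substIter σ k) ≤ mSize σ ^ k := by
  induction k with
  | zero => rw [mSize_zero]; simp
  | succ k ih =>
    refine (mSize_succ_le k).trans ?_
    rw [pow_succ']
    exact Nat.mul_le_mul_left _ ih

theorem mSize_mono [Nonempty A] (hmem : ∀ c e : A, c ∈ σ e) :
    Monotone fun k => mSize (substIter σ k) :=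
  monotone_nat_of_le_succ fun k =>
    (mSize_le_length_succ hmem k (Classical.arbitrary A)).trans (length_le_mSize _ _)

theorem one_le_mSize [Nonempty A] (hmem : ∀ c e : A, c ∈ σ e) (k : ℕ) :
    1 ≤ mSize (substIter σ k) := by
  have := mSize_mono hmem (Nat.zero_le k)
  simpa only [mSize_zero] using this

theorem one_le_length [Nonempty A] (hmem : ∀ c e : A, c ∈ σ e) (k : ℕ) (c : A) :
    1 ≤ (substIter σ k c).length := by
  cases k with
  | zero => simp [substIter]
  | succ k => exact (one_le_mSize hmem k).trans (mSize_le_length_succ hmem k c)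

theorem exists_le_length [Nonempty A] (hmem : ∀ c e : A, c ∈ σ e)
    (h2 : ∀ e, 2 ≤ (σ e).length) (n : ℕ) : ∃ k, ∀ c, n ≤ (substIter σ k c).length := by
  refine ⟨0 + 2 * n + 1, fun c => le_trans ?_ (mSize_le_length_succ hmem _ c)⟩
  refine le_trans ?_ (pow_mul_mSize_le hmem h2 0 n)
  rw [mSize_zero, mul_one]
  exact Nat.lt_two_pow_self.le

end Growth

/-! ### Tilings of a fixed point by images of letters -/

section Tiles

variable {σ : A → List A} {y z : ℕ → A}

/-- The starting position in `y` of the `i`-th tile `σᵏ(yᵢ)`, when `y` is a fixed point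
of `σ`. -/
def tilePos (σ : A → List A) (y : ℕ → A) (k i : ℕ) : ℕ :=
  (apply (substIter σ k) (factorAt y 0 i)).length

theorem tilePos_zero (k : ℕ) : tilePos σ y k 0 = 0 := by
  simp [tilePos, factorAt, apply]

theorem factorAt_succ (x : ℕ → A) (i : ℕ) : factorAt x 0 (i + 1) = factorAt x 0 i ++ [x i] := by
  rw [factorAt_add]; simp [factorAt]

theorem tilePos_succ (k i : ℕ) :
    tilePos σ y k (i + 1) = tilePos σ y k i + (substIter σ k (y i)).length := by
  rw [tilePos, factorAt_succ, apply_append, List.length_append, apply_singleton, tilePos]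

/-- A fixed point of `σ` is a fixed point of its iterates, hence a concatenation of tiles
`σᵏ(yᵢ)`. -/
theorem apply_substIter_factorAt (hy : SeqImage σ y y) (k n : ℕ) :
    apply (substIter σ k) (factorAt y 0 n) = factorAt y 0 (tilePos σ y k n) := by
  induction k with
  | zero => rw [tilePos, apply_substIter_zero, length_factorAt]
  | succ k ih =>
    have h := hy (tilePos σ y k n)
    rw [IsPrefixSeq, OccursAt, ← ih, ← apply_substIter_succ] at h
    exact h.symm

theorem tilePos_tilePos (hy : SeqImage σ y y) (k i : ℕ) :
    tilePos σ y (k + 1) i = tilePos σ y k (tilePos σ y 1 i) := by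
  have h := apply_substIter_factorAt hy 1 i
  rw [apply_substIter_succ, apply_substIter_zero] at h
  rw [tilePos, apply_substIter_succ_right, h]
  rfl

theorem factorAt_tile (hy : SeqImage σ y y) (k i : ℕ) :
    factorAt y (tilePos σ y k i) (substIter σ k (y i)).length = substIter σ k (y i) := by
  have h := apply_substIter_factorAt hy k (i + 1)
  rw [factorAt_succ, apply_append, apply_substIter_factorAt hy, apply_singleton, tilePos_succ,
    factorAt_add, zero_add] at h
  exact (List.append_cancel_left h).symm

/-- Tiles of the same type carry the same word, also in two different fixed points. -/
theorem tile_local (hy : SeqImage σ y y) (hz : SeqImage σ z z) {k i j t : ℕ}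
    (h : y i = z j) (ht : t < (substIter σ k (y i)).length) :
    y (tilePos σ y k i + t) = z (tilePos σ z k j + t) := by
  have h1 := factorAt_tile hy k i
  have h2 := factorAt_tile hz k j
  rw [← h] at h2
  exact factorAt_eq_iff.1 (h1.trans h2.symm) t ht

theorem tilePos_mono (k : ℕ) : Monotone (tilePos σ y k) :=
  monotone_nat_of_le_succ fun i => by rw [tilePos_succ]; omega

/-- Every letter occurs inside every tile of level one. -/
theorem exists_letter (hmem : ∀ c e : A, c ∈ σ e) (hy : SeqImage σ y y) (c : A) (i : ℕ) :
    ∃ j, tilePos σ y 1 i ≤ j ∧ j < tilePos σ y 1 (i + 1) ∧ y j = c := by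
  have h := factorAt_tile hy 1 i
  have hc : c ∈ substIter σ 1 (y i) := by rw [substIter_one]; exact hmem c _
  rw [← h, mem_factorAt] at hc
  obtain ⟨t, ht, hc⟩ := hc
  exact ⟨_, Nat.le_add_right _ _, by rw [tilePos_succ]; omega, hc⟩

/-- Every tile `σ^(k+1)(yᵢ)` contains a tile `σᵏ(c)`, for every letter `c`. -/
theorem exists_subtile (hmem : ∀ c e : A, c ∈ σ e) (hy : SeqImage σ y y) (c : A) (k i : ℕ) :
    ∃ j, tilePos σ y (k + 1) i ≤ tilePos σ y k j ∧
      tilePos σ y k j + (substIter σ k c).length ≤ tilePos σ y (k + 1) (i + 1) ∧ y j = c := by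
  obtain ⟨j, h1, h2, h3⟩ := exists_letter hmem hy c i
  refine ⟨j, ?_, ?_, h3⟩
  · rw [tilePos_tilePos hy]; exact tilePos_mono k h1
  · rw [tilePos_tilePos hy, ← h3, ← tilePos_succ]; exact tilePos_mono k h2

variable [Fintype A]

theorem tilePos_strictMono [Nonempty A] (hmem : ∀ c e : A, c ∈ σ e) (k : ℕ) :
    StrictMono (tilePos σ y k) :=
  strictMono_nat_of_lt_succ fun i => by
    rw [tilePos_succ]; have := one_le_length hmem k (y i); omega

theorem tilePos_add_le (k i n : ℕ) :
    tilePos σ y k (i + n) ≤ tilePos σ y k i + n * mSize (substIter σ k) := by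
  induction n with
  | zero => simp
  | succ n ih =>
    rw [← add_assoc, tilePos_succ, add_mul, one_mul]
    have := length_le_mSize (substIter σ k) (y (i + n))
    omega

theorem exists_tile [Nonempty A] (hmem : ∀ c e : A, c ∈ σ e) (k n : ℕ) :
    ∃ i, tilePos σ y k i ≤ n ∧ n < tilePos σ y k (i + 1) := by
  have hs := tilePos_strictMono (y := y) hmem k
  have hex : ∃ i, n < tilePos σ y k (i + 1) :=
    ⟨n, lt_of_lt_of_le (Nat.lt_succ_self n) hs.le_apply⟩
  classical
  refine ⟨Nat.find hex, ?_, Nat.find_spec hex⟩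
  rcases h : Nat.find hex with _ | m
  · rw [tilePos_zero]; exact Nat.zero_le _
  · have := Nat.find_min hex (m := m) (by omega)
    omega

/-- Every prefix of a fixed point recurs arbitrarily far. -/
theorem prefix_recurs [Nonempty A] (hmem : ∀ c e : A, c ∈ σ e) (h2 : ∀ e, 2 ≤ (σ e).length)
    (hy : SeqImage σ y y) (N m : ℕ) : ∃ j, m ≤ j ∧ ∀ t, t < N → y (j + t) = y t := by
  obtain ⟨k, hk⟩ := exists_le_length hmem h2 N
  obtain ⟨i, hi, -, hyi⟩ := exists_letter hmem hy (y 0) m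
  refine ⟨tilePos σ y k i, ?_, fun t ht => ?_⟩
  · exact (tilePos_strictMono hmem 1).le_apply.trans
      (hi.trans (tilePos_strictMono hmem k).le_apply)
  · have := tile_local hy hy hyi (t := t) (k := k) (lt_of_lt_of_le ht (hk _))
    rwa [tilePos_zero, zero_add] at this

end Tiles

/-! ### Linear recurrence -/

section Recurrence

theorem occursAt_pair {x : ℕ → A} {b c : A} {i : ℕ} :
    OccursAt x [b, c] i ↔ x i = b ∧ x (i + 1) = c := by
  simp [OccursAt, factorAt, List.range_succ]

variable [Fintype A] [Nonempty A] {σ : A → List A} {y : ℕ → A}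

/-- The set defining `R_σ` is bounded, uniformly over the fixed points of `σ`: a word `bc`
occurring in a fixed point occurs in some `σᵏ(e)`, hence in every tile of level `k + 1` of
every fixed point. -/
theorem bddAbove_gaps (hmem : ∀ c e : A, c ∈ σ e) (h2 : ∀ e, 2 ≤ (σ e).length) :
    BddAbove {r | ∃ x : ℕ → A, SeqImage σ x x ∧
      ∃ w i j, w.length = 2 ∧ SuccessiveOccs x w i j ∧ r = j - i} := by
  have key : ∀ bc : A × A, ∃ M, ∀ x : ℕ → A, SeqImage σ x x → ∀ i j,
      SuccessiveOccs x [bc.1, bc.2] i j → j - i ≤ M := by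
    rintro ⟨b, c⟩
    by_cases hex : ∃ z : ℕ → A, SeqImage σ z z ∧ ∃ n, z n = b ∧ z (n + 1) = c
    · obtain ⟨z, hz, n, hb, hc⟩ := hex
      obtain ⟨k, hk⟩ := exists_le_length hmem h2 (n + 2)
      refine ⟨2 * mSize (substIter σ (k + 1)), fun x hx i j hij => ?_⟩
      obtain ⟨hlt, -, -, hno⟩ := hij
      obtain ⟨m, hm1, hm2⟩ := exists_tile (y := x) hmem (k + 1) i
      obtain ⟨q, hq1, hq2, hq⟩ := exists_subtile hmem hx (z 0) k (m + 1)
      have hloc : ∀ t, t < n + 2 → x (tilePos σ x k q + t) = z t := fun t ht => by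
        have := tile_local hx hz hq (t := t) (k := k) (by rw [hq]; exact ht.trans_le (hk _))
        rwa [tilePos_zero, zero_add] at this
      have hle := hk (z 0)
      have hadd := tilePos_add_le (σ := σ) (y := x) (k + 1) m 2
      by_contra hcon
      refine hno (tilePos σ x k q + n) (by omega) ?_ (occursAt_pair.2 ⟨?_, ?_⟩)
      · have : m + 1 + 1 = m + 2 := rfl
        rw [this] at hq2
        omega
      · rw [hloc n (by omega), hb]
      · rw [add_assoc, hloc (n + 1) (by omega), hc]
    · exact ⟨0, fun x hx i j hij =>
        absurd ⟨x, hx, i, occursAt_pair.1 hij.2.1⟩ hex⟩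
  choose M hM using key
  refine ⟨Finset.univ.sup M, ?_⟩
  rintro r ⟨x, hx, w, i, j, hw, hij, rfl⟩
  obtain ⟨b, c, rfl⟩ := List.length_eq_two.1 hw
  exact (hM (b, c) x hx i j hij).trans (Finset.le_sup (f := M) (Finset.mem_univ _))

/-- Every window of `R_σ` positions of `y` contains an occurrence of every word of length two
of `y`. -/
theorem pair_recurs (hmem : ∀ c e : A, c ∈ σ e) (h2 : ∀ e, 2 ≤ (σ e).length)
    (hy : SeqImage σ y y) (n i : ℕ) :
    ∃ j, i ≤ j ∧ j < i + Rconst σ ∧ y j = y n ∧ y (j + 1) = y (n + 1) := by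
  classical
  -- occurrences of the pair are unbounded
  have hinf : ∀ m, ∃ j, m ≤ j ∧ OccursAt y [y n, y (n + 1)] j := fun m => by
    obtain ⟨j, hj, h⟩ := prefix_recurs hmem h2 hy (n + 2) m
    refine ⟨j + n, by omega, occursAt_pair.2 ⟨h n (by omega), ?_⟩⟩
    rw [add_assoc]; exact h (n + 1) (by omega)
  -- the window is first moved to the right of position `n`, inside a copy of a prefix
  obtain ⟨s, hs, hcopy⟩ := prefix_recurs hmem h2 hy (i + Rconst σ + 1) (n + 1)
  set P : ℕ → Prop := fun j => OccursAt y [y n, y (n + 1)] j with hP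
  have hPn : P n := occursAt_pair.2 ⟨rfl, rfl⟩
  set i0 := Nat.findGreatest P (s + i - 1) with hi0
  have hPi0 : P i0 := Nat.findGreatest_spec (m := n) (by omega) hPn
  have hi0le : i0 ≤ s + i - 1 := Nat.findGreatest_le _
  have hex : ∃ j, i0 + 1 ≤ j ∧ P j := hinf (i0 + 1)
  obtain ⟨hj1, hj2⟩ := Nat.find_spec hex
  have hjmin : ∀ k, i0 < k → k < Nat.find hex → ¬ P k := fun k hk1 hk2 hk3 =>
    Nat.find_min hex hk2 ⟨hk1, hk3⟩
  set j := Nat.find hex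
  have hgap : j - i0 ≤ Rconst σ :=
    le_csSup (bddAbove_gaps hmem h2)
      ⟨y, hy, [y n, y (n + 1)], i0, j, rfl, ⟨hj1, hPi0, hj2, hjmin⟩, rfl⟩
  have hji : s + i ≤ j := by
    by_contra hcon
    have := Nat.le_findGreatest (P := P) (n := s + i - 1) (m := j) (by omega) hj2
    omega
  obtain ⟨e1, e2⟩ := occursAt_pair.1 hj2
  clear_value j
  obtain ⟨t, rfl⟩ := Nat.exists_eq_add_of_le (show s ≤ j by omega)
  refine ⟨t, by omega, by omega, ?_, ?_⟩
  · rw [← hcopy t (by omega), e1]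
  · rw [← hcopy (t + 1) (by omega), ← add_assoc, e2]

theorem one_le_Rconst (hmem : ∀ c e : A, c ∈ σ e) (h2 : ∀ e, 2 ≤ (σ e).length)
    (hy : SeqImage σ y y) : 1 ≤ Rconst σ := by
  obtain ⟨j, h1, h3, -⟩ := pair_recurs hmem h2 hy 0 0
  omega

/-- A factor of length `g + 1` with `g ≤ |σᵏ|` meets at most two tiles of level `k + 1`, so it
occurs in every window of `R_σ |σ^(k+1)|` positions. -/
theorem factor_recurs_level (hmem : ∀ c e : A, c ∈ σ e) (h2 : ∀ e, 2 ≤ (σ e).length)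
    (hy : SeqImage σ y y) {k g : ℕ} (hg : g ≤ mSize (substIter σ k)) (n i : ℕ) :
    ∃ j, i ≤ j ∧ j < i + Rconst σ * mSize (substIter σ (k + 1)) ∧
      ∀ t, t ≤ g → y (j + t) = y (n + t) := by
  classical
  obtain ⟨m, hm1, hm2⟩ := exists_tile (y := y) hmem (k + 1) n
  obtain ⟨r, rfl⟩ := Nat.exists_eq_add_of_le hm1
  have hs := tilePos_strictMono (y := y) hmem (k + 1)
  have hex : ∃ i1, i ≤ tilePos σ y (k + 1) i1 + r := ⟨i, hs.le_apply.trans (Nat.le_add_right _ _)⟩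
  have hr : r < (substIter σ (k + 1) (y m)).length := by rw [tilePos_succ] at hm2; omega
  have hrH := hr.trans_le (length_le_mSize (substIter σ (k + 1)) (y m))
  obtain ⟨j, hj1, hj2, e1, e2⟩ := pair_recurs hmem h2 hy m (Nat.find hex)
  refine ⟨tilePos σ y (k + 1) j + r, ?_, ?_, fun t ht => ?_⟩
  · have := Nat.find_spec hex
    have := hs.monotone hj1
    omega
  · set H := mSize (substIter σ (k + 1)) with hH
    rcases hi : Nat.find hex with _ | i1
    · rw [hi] at hj2
      have h1 : tilePos σ y (k + 1) j ≤ j * H := by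
        have h1 := tilePos_add_le (σ := σ) (y := y) (k + 1) 0 j
        rwa [tilePos_zero, zero_add, zero_add] at h1
      have h3 : (j + 1) * H ≤ Rconst σ * H := Nat.mul_le_mul_right _ (by omega)
      rw [add_mul, one_mul] at h3
      omega
    · have hlt := Nat.find_min hex (m := i1) (by omega)
      obtain ⟨q, rfl⟩ := Nat.exists_eq_add_of_le (show i1 ≤ j by omega)
      have h1 : tilePos σ y (k + 1) (i1 + q) ≤ tilePos σ y (k + 1) i1 + q * H :=
        tilePos_add_le (k + 1) i1 q
      have h3 : q * H ≤ Rconst σ * H := Nat.mul_le_mul_right _ (by omega)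
      omega
  · rcases lt_or_ge (r + t) (substIter σ (k + 1) (y m)).length with h | h
    · rw [add_assoc, add_assoc]
      exact tile_local hy hy e1 (by rw [e1]; exact h)
    · obtain ⟨t', ht'⟩ := Nat.exists_eq_add_of_le h
      have hlen := mSize_le_length_succ hmem k (y (m + 1))
      have := tile_local hy hy e2 (k := k + 1) (t := t') (by rw [e2]; omega)
      rw [tilePos_succ, tilePos_succ, e1] at this
      rw [add_assoc, add_assoc, ht', ← add_assoc, ← add_assoc]
      exact this

/-- Linear recurrence: every factor of length `g + 1` of `y` occurs in every window of
`|σ|² R_σ g` positions. -/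
theorem factor_recurs (hmem : ∀ c e : A, c ∈ σ e) (h2 : ∀ e, 2 ≤ (σ e).length)
    (hy : SeqImage σ y y) {g : ℕ} (hg : 0 < g) (n i : ℕ) :
    ∃ j, i ≤ j ∧ j < i + mSize σ ^ 2 * Rconst σ * g ∧
      ∀ t, t ≤ g → y (j + t) = y (n + t) := by
  classical
  have hex : ∃ k, g ≤ mSize (substIter σ k) := by
    obtain ⟨k, hk⟩ := exists_le_length hmem h2 g
    exact ⟨k, (hk (y 0)).trans (length_le_mSize _ _)⟩
  have hS : 2 ≤ mSize σ := (h2 (y 0)).trans (length_le_mSize _ _)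
  have hH : mSize (substIter σ (Nat.find hex + 1)) ≤ mSize σ ^ 2 * g := by
    rcases hk : Nat.find hex with _ | k
    · have := mSize_one (σ := σ)
      rw [zero_add, this]
      nlinarith
    · have h1 := Nat.find_min hex (m := k) (by omega)
      have h3 := mSize_succ_le (σ := σ) (k + 1)
      have h4 := mSize_succ_le (σ := σ) k
      calc _ ≤ _ := h3
        _ ≤ mSize σ * (mSize σ * mSize (substIter σ k)) := Nat.mul_le_mul_left _ h4
        _ = mSize σ ^ 2 * mSize (substIter σ k) := by ring
        _ ≤ _ := Nat.mul_le_mul_left _ (by omega)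
  obtain ⟨j, hj1, hj2, hj3⟩ := factor_recurs_level hmem h2 hy (Nat.find_spec hex) n i
  refine ⟨j, hj1, hj2.trans_le ?_, hj3⟩
  have := Nat.mul_le_mul_left (Rconst σ) hH
  have e : mSize σ ^ 2 * Rconst σ * g = Rconst σ * (mSize σ ^ 2 * g) := by ring
  omega

end Recurrence

/-! ### Periods and the prefixes `w_n` -/

section Periods

variable {x : ℕ → B} {K p : ℕ}

/-- Linear recurrence with constant `K`: every factor of length `g + 1` occurs in every window
of `K g` positions. -/
def LinRec (x : ℕ → B) (K : ℕ) : Prop :=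
  ∀ g, 0 < g → ∀ n i, ∃ j, i ≤ j ∧ j < i + K * g ∧ ∀ t, t ≤ g → x (j + t) = x (n + t)

/-- `p` is the least period of `x`. -/
def IsLeastPeriod (x : ℕ → B) (p : ℕ) : Prop :=
  0 < p ∧ (∀ n, x (n + p) = x n) ∧ ∀ q, 0 < q → q < p → ¬ ∀ n, x (n + q) = x n

theorem exists_isLeastPeriod (h : IsPeriodic x) : ∃ p, IsLeastPeriod x p := by
  classical
  refine ⟨Nat.find h, (Nat.find_spec h).1, (Nat.find_spec h).2, fun q h0 hq hper => ?_⟩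
  exact Nat.find_min h hq ⟨h0, hper⟩

theorem period_mul (hp : ∀ n, x (n + p) = x n) (n m : ℕ) : x (n + m * p) = x n := by
  induction m with
  | zero => simp
  | succ m ih => rw [add_mul, one_mul, ← add_assoc, hp, ih]

theorem period_of_eventually (hp0 : 0 < p) (hp : ∀ n, x (n + p) = x n) {q N : ℕ}
    (h : ∀ n, N ≤ n → x (n + q) = x n) (n : ℕ) : x (n + q) = x n := by
  have h1 := h (n + N * p) ((Nat.le_mul_of_pos_right N hp0).trans (Nat.le_add_left _ _))
  have e : n + N * p + q = n + q + N * p := by ring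
  rwa [e, period_mul hp, period_mul hp] at h1

/-- Two occurrences of a word at a distance `g` smaller than the least period are far apart
with respect to the length `m` of the word: otherwise all factors of length `g + 1` would occur
in a `g`-periodic stretch of `x`. -/
theorem IsLeastPeriod.lt_mul (hx : LinRec x K) (hp : IsLeastPeriod x p) {g i m : ℕ}
    (hg : 0 < g) (hgp : g < p) (h : ∀ t, t < m → x (i + g + t) = x (i + t)) : m < K * g := by
  by_contra hcon
  refine hp.2.2 g hg hgp fun n => ?_
  obtain ⟨j, hj1, hj2, hj⟩ := hx g hg n i
  obtain ⟨t, rfl⟩ := Nat.exists_eq_add_of_le hj1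
  have h1 := h t (by omega)
  rw [← hj g le_rfl]
  have h2 := hj 0 (Nat.zero_le _)
  rw [add_zero, add_zero] at h2
  rw [← h2, ← h1]
  congr 1
  ring

/-- The passage from `w_n` to `w_{n+1}` prepends the return word between the occurrence of `w_n`
at `0` and the next one, of length `g`. -/
theorem wSeq_succ (hrec : ∀ N m, ∃ j, m ≤ j ∧ ∀ t, t < N → x (j + t) = x t) {n m : ℕ}
    (h : wSeq x n = factorAt x 0 m) :
    ∃ g, 0 < g ∧ (∀ t, t < m → x (g + t) = x t) ∧ wSeq x (n + 1) = factorAt x 0 (g + m) := by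
  have hne : {j | 0 < j ∧ OccursAt x (factorAt x 0 m) j}.Nonempty := by
    obtain ⟨j, hj, hj'⟩ := hrec m 1
    exact ⟨j, hj, occursAt_factorAt.2 fun t ht => by rw [zero_add]; exact hj' t ht⟩
  obtain ⟨hg0, hg⟩ := Nat.sInf_mem hne
  set g := sInf {j | 0 < j ∧ OccursAt x (factorAt x 0 m) j} with hgdef
  have hz : sInf {i | derivedSeq x (factorAt x 0 m) i = derivedSeq x (factorAt x 0 m) 0} = 0 :=
    Nat.sInf_eq_zero.2 (Or.inl rfl)
  have hocc : occSeq x (factorAt x 0 m) (0 + 1) = g := rfl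
  have hocc0 : occSeq x (factorAt x 0 m) 0 = 0 := rfl
  refine ⟨g, hg0, fun t ht => ?_, ?_⟩
  · have := occursAt_factorAt.1 hg t ht
    rwa [zero_add] at this
  · rw [wSeq, h, thetaLetter, hz, retWord, hocc, hocc0, factorAt_add, Nat.sub_zero, zero_add]
    congr 1
    have := hg
    rw [OccursAt, length_factorAt] at this
    exact this.symm

theorem wSeq_eq (hrec : ∀ N m, ∃ j, m ≤ j ∧ ∀ t, t < N → x (j + t) = x t) (n : ℕ) :
    ∃ m, 1 ≤ m ∧ wSeq x n = factorAt x 0 m := by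
  induction n with
  | zero => exact ⟨1, le_rfl, by simp [wSeq, factorAt]⟩
  | succ n ih =>
    obtain ⟨m, hm, h⟩ := ih
    obtain ⟨g, -, -, h'⟩ := wSeq_succ hrec h
    exact ⟨g + m, by omega, h'⟩

theorem wSeq_eq_length (hrec : ∀ N m, ∃ j, m ≤ j ∧ ∀ t, t < N → x (j + t) = x t) (n : ℕ) :
    wSeq x n = factorAt x 0 (wSeq x n).length := by
  obtain ⟨m, -, h⟩ := wSeq_eq hrec n
  rw [h, length_factorAt]

/-- As long as the prefixes `w_n` are shorter than the least period, each one exceeds the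
preceding one by a factor `1 + 1 / K`. -/
theorem wSeq_growth (hrec : ∀ N m, ∃ j, m ≤ j ∧ ∀ t, t < N → x (j + t) = x t)
    (hx : LinRec x K) (hp : IsLeastPeriod x p) (n j : ℕ) :
    p ≤ (wSeq x (n + j)).length ∨
      (K + j) * (wSeq x n).length ≤ K * (wSeq x (n + j)).length ∧
        (wSeq x n).length ≤ (wSeq x (n + j)).length := by
  induction j with
  | zero => right; simp
  | succ j ih =>
    obtain ⟨g, hg0, hg, hw⟩ := wSeq_succ hrec (wSeq_eq_length hrec (n + j))
    have hlen : (wSeq x (n + (j + 1))).length = g + (wSeq x (n + j)).length := by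
      rw [← add_assoc, hw, length_factorAt]
    rw [hlen]
    rcases ih with ih | ⟨ih, ih'⟩
    · left; omega
    · rcases lt_or_ge g p with hgp | hgp
      · right
        have h1 := hp.lt_mul hx (i := 0) hg0 hgp (m := (wSeq x (n + j)).length)
          (fun t ht => by rw [zero_add, zero_add]; exact hg t ht)
        constructor
        · nlinarith
        · omega
      · left; omega

theorem wSeq_length (hrec : ∀ N m, ∃ j, m ≤ j ∧ ∀ t, t < N → x (j + t) = x t)
    (hK : 0 < K) (hx : LinRec x K) (hp : IsLeastPeriod x p) (m : ℕ) :
    p ≤ (wSeq x (m * K)).length ∨ 2 ^ m ≤ (wSeq x (m * K)).length := by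
  induction m with
  | zero => right; simp [wSeq]
  | succ m ih =>
    have e : (m + 1) * K = m * K + K := by ring
    rw [e]
    rcases wSeq_growth hrec hx hp (m * K) K with h | ⟨h, h'⟩
    · exact Or.inl h
    · rcases ih with ih | ih
      · left; omega
      · right
        rw [← two_mul, mul_comm 2 K, mul_assoc] at h
        have := Nat.le_of_mul_le_mul_left h hK
        rw [pow_succ]; omega

/-- The prefixes at least as long as the least period have a single return word. -/
theorem returnWords_of_le (hp : IsLeastPeriod x p) {m : ℕ} (hm : p ≤ m) :
    returnWords x (factorAt x 0 m) = {factorAt x 0 p} := by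
  obtain ⟨hp0, hper, hmin⟩ := hp
  -- two occurrences never lie at a distance smaller than the least period
  have hno : ∀ i g, 0 < g → g < p → OccursAt x (factorAt x 0 m) i →
      ¬ OccursAt x (factorAt x 0 m) (i + g) := fun i g h0 h1 h2 h3 => by
    rw [occursAt_factorAt] at h2 h3
    refine hmin g h0 h1 (period_of_eventually hp0 hper (N := i) fun n hn => ?_)
    obtain ⟨s, rfl⟩ := Nat.exists_eq_add_of_le hn
    have hs := Nat.mod_lt s hp0
    have key : ∀ r, x (r + s) = x (r + s % p) := fun r => by
      conv_lhs => rw [← Nat.mod_add_div s p, mul_comm p, ← add_assoc]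
      exact period_mul hper _ _
    have e : i + s + g = i + g + s := by ring
    rw [e, key, key i, h2 _ (hs.trans_le hm), h3 _ (hs.trans_le hm)]
  ext w
  rw [Set.mem_singleton_iff]
  constructor
  · rintro ⟨i, j, ⟨hij, hi, hj, hbetween⟩, rfl⟩
    obtain ⟨g, rfl⟩ := Nat.exists_eq_add_of_le hij.le
    have hip : OccursAt x (factorAt x 0 m) (i + p) := by
      rw [occursAt_factorAt] at hi ⊢
      intro t ht
      rw [← hi t ht, add_right_comm, hper]
    have h1 : ¬ g < p := fun h => hno i g (by omega) h hi hj
    have h2 : ¬ p < g := fun h => hbetween (i + p) (by omega) (by omega) hip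
    have h3 : i + g - i = p := by omega
    rw [h3, factorAt_eq_iff]
    exact fun t ht => occursAt_factorAt.1 hi t (by omega)
  · rintro rfl
    have h0 : OccursAt x (factorAt x 0 m) 0 := occursAt_factorAt.2 fun _ _ => rfl
    refine ⟨0, p, ⟨hp0, h0, occursAt_factorAt.2 fun t _ => ?_, fun k hk1 hk2 hk => ?_⟩, rfl⟩
    · rw [zero_add, add_comm, hper]
    · exact hno 0 k hk1 hk2 h0 (by rwa [zero_add])

/-- If all return words to a prefix are equal to `r`, then `x = r^ω`. -/
theorem periodic_of_ncard (hrec : ∀ N m, ∃ j, m ≤ j ∧ ∀ t, t < N → x (j + t) = x t)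
    {m : ℕ} (h : (returnWords x (factorAt x 0 m)).ncard = 1) : IsPeriodic x := by
  classical
  obtain ⟨r, hr⟩ := Set.ncard_eq_one.1 h
  set P : ℕ → Prop := fun j => OccursAt x (factorAt x 0 m) j with hP
  -- the successor of an occurrence lies at distance `|r|`, and the word between them is `r`
  have hnext : ∀ i, P i → 0 < r.length ∧ P (i + r.length) ∧ factorAt x i r.length = r := by
    intro i hi
    have hex : ∃ j, i < j ∧ P j := by
      obtain ⟨j, hj, hj'⟩ := hrec m (i + 1)
      exact ⟨j, hj, occursAt_factorAt.2 fun t ht => by rw [zero_add]; exact hj' t ht⟩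
    obtain ⟨h1, h2⟩ := Nat.find_spec hex
    have hmem : factorAt x i (Nat.find hex - i) ∈ returnWords x (factorAt x 0 m) :=
      ⟨i, Nat.find hex, ⟨h1, hi, h2, fun k hk1 hk2 hk3 => Nat.find_min hex hk2 ⟨hk1, hk3⟩⟩, rfl⟩
    rw [hr, Set.mem_singleton_iff] at hmem
    have hlen : Nat.find hex - i = r.length := by rw [← hmem, length_factorAt]
    have e : i + r.length = Nat.find hex := by omega
    refine ⟨by omega, by rw [e]; exact h2, by rw [← hlen]; exact hmem⟩
  have h0 : P 0 := occursAt_factorAt.2 fun _ _ => rfl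
  have hall : ∀ s, P (s * r.length) := fun s => by
    induction s with
    | zero => simpa using h0
    | succ s ih => rw [add_mul, one_mul]; exact (hnext _ ih).2.1
  have hq := (hnext 0 h0).1
  refine ⟨r.length, hq, fun n => ?_⟩
  have key : ∀ s t, t < r.length → x (s * r.length + t) = x (0 + t) := fun s =>
    factorAt_eq_iff.1 ((hnext _ (hall s)).2.2.trans (hnext 0 h0).2.2.symm)
  have hm := Nat.mod_lt n hq
  have e1 : n = (n / r.length) * r.length + n % r.length := (Nat.div_add_mod' _ _).symm
  have e2 : n + r.length = (n / r.length + 1) * r.length + n % r.length := by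
    rw [add_mul, one_mul]; omega
  rw [e2, key _ _ hm]
  conv_rhs => rw [e1, key _ _ hm]

end Periods

/-! ### Sequences cut into tiles by a set of marks -/

section Marks

variable {x : ℕ → B} {y : ℕ → A} {S K p : ℕ}

theorem exists_between_of_strictMono {f : ℕ → ℕ} (h0 : f 0 = 0) (hf : StrictMono f) (m : ℕ) :
    ∃ i, f i ≤ m ∧ m < f (i + 1) := by
  induction m with
  | zero => exact ⟨0, h0.le, lt_of_eq_of_lt h0.symm (hf Nat.zero_lt_one)⟩
  | succ m ih =>
    obtain ⟨i, h1, h2⟩ := ih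
    rcases Nat.lt_or_ge (m + 1) (f (i + 1)) with h | h
    · exact ⟨i, by omega, h⟩
    · exact ⟨i + 1, h, by have := hf (Nat.lt_add_one (i + 1)); omega⟩

/-- The sequence `x` is cut into consecutive tiles, the `i`-th one starting at `pos i` and having
a length `len (y i)` comparable to the scale `h`. The marks are the occurrences of a word of
length `h`; every tile contains one, and they are separated by at least `h / K`. The letters of
two consecutive tiles depend only on the corresponding two letters of `y`. -/
structure MarkedTiling (x : ℕ → B) (y : ℕ → A) (S K : ℕ) where
  /-- the length of the tiles of a given type -/
  len : A → ℕ
  /-- the starting position of the `i`-th tile -/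
  pos : ℕ → ℕ
  /-- the scale -/
  h : ℕ
  /-- the positions of the marks -/
  Mark : ℕ → Prop
  pos_zero : pos 0 = 0
  pos_succ : ∀ i, pos (i + 1) = pos i + len (y i)
  h_pos : 0 < h
  h_le : ∀ c, h ≤ len c
  len_le : ∀ c, len c ≤ S * h
  exists_mark : ∀ i, ∃ u, pos i ≤ u ∧ u + h ≤ pos (i + 1) ∧ Mark u
  x_local : ∀ i i', y i = y i' → y (i + 1) = y (i' + 1) →
    ∀ r, r < len (y i) + len (y (i + 1)) → x (pos i + r) = x (pos i' + r)
  mark_congr : ∀ u v, (∀ t, t < h → x (u + t) = x (v + t)) → Mark u → Mark v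
  sep : ∀ u v, Mark u → Mark v → u < v → h < K * (v - u)

namespace MarkedTiling

variable (M N : MarkedTiling x y S K)

noncomputable instance : DecidablePred M.Mark := Classical.decPred _

/-- The number of marks before the `i`-th tile. -/
noncomputable def before (i : ℕ) : ℕ := Nat.count M.Mark (M.pos i)

/-- The position of the `m`-th mark. -/
noncomputable def loc (m : ℕ) : ℕ := Nat.nth M.Mark m

/-- The word between the `m`-th mark and the next one. -/
noncomputable def gapWord (m : ℕ) : List B := factorAt x (M.loc m) (M.loc (m + 1) - M.loc m)

theorem pos_strictMono : StrictMono M.pos := strictMono_nat_of_lt_succ fun i => by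
  have := M.h_pos
  have := M.h_le (y i)
  rw [M.pos_succ]; omega

theorem infinite : {n | M.Mark n}.Infinite := Set.infinite_of_not_bddAbove fun ⟨b, hb⟩ => by
  obtain ⟨u, h1, -, h2⟩ := M.exists_mark (b + 1)
  have := M.pos_strictMono.le_apply (x := b + 1)
  have := hb h2
  omega

theorem mark_loc (m : ℕ) : M.Mark (M.loc m) := Nat.nth_mem_of_infinite M.infinite m

theorem loc_strictMono : StrictMono M.loc := Nat.nth_strictMono M.infinite

theorem before_zero : M.before 0 = 0 := by rw [before, M.pos_zero, Nat.count_zero]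

theorem le_loc_iff {a b : ℕ} : a ≤ M.loc b ↔ Nat.count M.Mark a ≤ b :=
  (Nat.count_le_iff_le_nth M.infinite).symm

theorem loc_lt_iff {a b : ℕ} : M.loc a < b ↔ a < Nat.count M.Mark b :=
  (Nat.lt_nth_iff_count_lt M.infinite).symm

theorem loc_count {u : ℕ} (hu : M.Mark u) : M.loc (Nat.count M.Mark u) = u := Nat.nth_count hu

theorem before_strictMono : StrictMono M.before := strictMono_nat_of_lt_succ fun i => by
  obtain ⟨u, h1, h2, h3⟩ := M.exists_mark i
  have h4 : M.loc (Nat.count M.Mark u) < M.pos (i + 1) := by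
    rw [M.loc_count h3]
    have := M.h_pos
    omega
  exact (Nat.count_monotone M.Mark h1).trans_lt (M.loc_lt_iff.1 h4)

variable {M} in
theorem mark_local {i i' r : ℕ} (h1 : y i = y i') (h2 : y (i + 1) = y (i' + 1))
    (hr : r + M.h ≤ M.len (y i) + M.len (y (i + 1))) (hm : M.Mark (M.pos i + r)) :
    M.Mark (M.pos i' + r) := by
  refine M.mark_congr _ _ (fun t ht => ?_) hm
  rw [add_assoc, add_assoc]
  exact M.x_local i i' h1 h2 _ (by omega)

theorem count_local {i i' r : ℕ} (h1 : y i = y i') (h2 : y (i + 1) = y (i' + 1))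
    (hr : r + M.h ≤ M.len (y i) + M.len (y (i + 1))) :
    Nat.count M.Mark (M.pos i + r) + M.before i' =
      Nat.count M.Mark (M.pos i' + r) + M.before i := by
  induction r with
  | zero => simp only [before, add_zero]; ring
  | succ r ih =>
    have ih := ih (by omega)
    have hiff : M.Mark (M.pos i + r) ↔ M.Mark (M.pos i' + r) :=
      ⟨mark_local h1 h2 (by omega), mark_local h1.symm h2.symm (by rw [← h1, ← h2]; omega)⟩
    rw [← add_assoc, ← add_assoc, Nat.count_succ, Nat.count_succ]
    by_cases hm : M.Mark (M.pos i + r)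
    · rw [if_pos hm, if_pos (hiff.1 hm)]; omega
    · rw [if_neg hm, if_neg (fun h => hm (hiff.2 h))]; omega

theorem before_local {i i' : ℕ} (h1 : y i = y i') (h2 : y (i + 1) = y (i' + 1)) :
    M.before (i + 1) + M.before i' = M.before (i' + 1) + M.before i := by
  have := M.count_local h1 h2 (r := M.len (y i)) (by have := M.h_le (y (i + 1)); omega)
  rw [← M.pos_succ] at this
  rw [h1, ← M.pos_succ] at this
  exact this

/-- The position of a mark relative to its tile depends only on the tile and the next one. -/
theorem loc_local {i i' t : ℕ} (h1 : y i = y i') (h2 : y (i + 1) = y (i' + 1))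
    (ht : M.before i + t ≤ M.before (i + 1)) :
    ∃ r, M.loc (M.before i + t) = M.pos i + r ∧ M.loc (M.before i' + t) = M.pos i' + r ∧
      r + M.h ≤ M.len (y i) + M.len (y (i + 1)) := by
  have hlow : M.pos i ≤ M.loc (M.before i + t) := M.le_loc_iff.2 (Nat.le_add_right _ _)
  obtain ⟨r, hr⟩ := Nat.exists_eq_add_of_le hlow
  obtain ⟨u, hu1, hu2, hu3⟩ := M.exists_mark (i + 1)
  -- the mark cannot lie beyond the first mark of the next tile
  have hup : M.loc (M.before i + t) ≤ u := by
    rw [← M.loc_count hu3]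
    exact M.loc_strictMono.monotone (ht.trans (Nat.count_monotone _ hu1))
  rw [M.pos_succ (i + 1), M.pos_succ i] at hu2
  have hrh : r + M.h ≤ M.len (y i) + M.len (y (i + 1)) := by omega
  refine ⟨r, hr, ?_, hrh⟩
  have hmark : M.Mark (M.pos i' + r) := mark_local h1 h2 hrh (hr ▸ M.mark_loc _)
  have hc := M.count_local h1 h2 hrh
  have hc' : Nat.count M.Mark (M.pos i + r) = M.before i + t := by
    rw [← hr]; exact Nat.count_nth_of_infinite M.infinite _
  rw [← M.loc_count hmark]
  congr 1
  omega

theorem gapWord_local {i i' t : ℕ} (h1 : y i = y i') (h2 : y (i + 1) = y (i' + 1))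
    (ht : M.before i + t < M.before (i + 1)) :
    M.gapWord (M.before i + t) = M.gapWord (M.before i' + t) := by
  obtain ⟨r, ha, ha', -⟩ := M.loc_local h1 h2 ht.le
  obtain ⟨s, hb, hb', hs⟩ := M.loc_local h1 h2 (t := t + 1) ht
  rw [← add_assoc] at hb hb'
  have hlt := M.loc_strictMono (Nat.lt_succ_self (M.before i + t))
  rw [Nat.succ_eq_add_one, ha, hb] at hlt
  rw [gapWord, gapWord, ha, ha', hb, hb', Nat.add_sub_add_left, Nat.add_sub_add_left,
    factorAt_eq_iff]
  intro q hq
  have := M.h_pos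
  rw [add_assoc, add_assoc]
  exact M.x_local i i' h1 h2 _ (by omega)

theorem loc_add (a s : ℕ) : K * M.loc a + s * (M.h + 1) ≤ K * M.loc (a + s) := by
  induction s with
  | zero => simp
  | succ s ih =>
    have hlt := M.loc_strictMono (Nat.lt_succ_self (a + s))
    obtain ⟨d, hd⟩ := Nat.exists_eq_add_of_lt hlt
    have := M.sep _ _ (M.mark_loc _) (M.mark_loc _) hlt
    rw [Nat.succ_eq_add_one] at hd this
    rw [hd, show M.loc (a + s) + d + 1 - M.loc (a + s) = d + 1 by omega] at this
    rw [← add_assoc, hd]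
    nlinarith

theorem K_pos (M : MarkedTiling x y S K) : 0 < K := by
  rcases Nat.eq_zero_or_pos K with h | h
  · have := M.sep _ _ (M.mark_loc 0) (M.mark_loc 1) (M.loc_strictMono Nat.zero_lt_one)
    simp [h] at this
  · exact h

/-- By separation, a tile contains at most `S K` marks. -/
theorem before_succ_le (i : ℕ) : M.before (i + 1) ≤ M.before i + S * K := by
  by_contra hcon
  have h1 : M.loc (M.before i + S * K) < M.pos (i + 1) := M.loc_lt_iff.2 (by
    rw [before] at hcon ⊢; rw [before] at hcon; omega)
  have h2 : M.pos i ≤ M.loc (M.before i) := M.le_loc_iff.2 le_rfl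
  have h3 := M.loc_add (M.before i) (S * K)
  have h4 := M.len_le (y i)
  rw [M.pos_succ] at h1
  have h5 : M.loc (M.before i + S * K) < M.loc (M.before i) + S * M.h := by omega
  have h6 := Nat.mul_lt_mul_of_pos_left h5 M.K_pos
  nlinarith [Nat.zero_le (S * K)]

theorem loc_succ_le (m : ℕ) : M.loc (m + 1) ≤ M.loc m + 2 * S * M.h := by
  obtain ⟨i, h1, h2⟩ := exists_between_of_strictMono M.pos_zero M.pos_strictMono (M.loc m)
  obtain ⟨u, hu1, hu2, hu3⟩ := M.exists_mark (i + 1)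
  have h3 : M.loc (m + 1) ≤ u := by
    rw [← M.loc_count hu3]
    exact M.loc_strictMono.monotone (M.loc_lt_iff.1 (h2.trans_le hu1))
  have h4 := M.len_le (y i)
  have h5 := M.len_le (y (i + 1))
  rw [M.pos_succ (i + 1), M.pos_succ i] at hu2
  nlinarith

theorem loc_le (a s : ℕ) : M.loc (a + s) ≤ M.loc a + s * (2 * S * M.h) := by
  induction s with
  | zero => simp
  | succ s ih =>
    have := M.loc_succ_le (a + s)
    rw [← add_assoc]
    linarith [add_mul s 1 (2 * S * M.h), one_mul (2 * S * M.h)]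

open Classical in
/-- The words following the marks of the tiles, indexed by the type of the tile, the type of the
next tile and the rank of the mark in the tile; the value is `none` if there is no such mark. The
index `none` serves to recognise the value `none`. -/
noncomputable def code : Option (A × A × Fin (S * K)) → Option (List B)
  | none => none
  | some (b, c, t) =>
    if hh : ∃ i, y i = b ∧ y (i + 1) = c ∧ M.before i + t < M.before (i + 1) then
      some (M.gapWord (M.before hh.choose + t))
    else none

theorem code_eq (i : ℕ) (t : Fin (S * K)) (ht : M.before i + t < M.before (i + 1)) :
    M.code (some (y i, y (i + 1), t)) = some (M.gapWord (M.before i + t)) := by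
  have hh : ∃ j, y j = y i ∧ y (j + 1) = y (i + 1) ∧ M.before j + t < M.before (j + 1) :=
    ⟨i, rfl, rfl, ht⟩
  rw [code, dif_pos hh]
  obtain ⟨h1, h2, h3⟩ := hh.choose_spec
  rw [M.gapWord_local h1 h2 h3]

theorem code_eq_none_iff (i : ℕ) (t : Fin (S * K)) :
    M.code (some (y i, y (i + 1), t)) = M.code none ↔ ¬ M.before i + t < M.before (i + 1) := by
  constructor
  · intro h hlt
    rw [M.code_eq i t hlt] at h
    exact absurd h (by simp [code])
  · intro hlt
    have hh : ¬ ∃ j, y j = y i ∧ y (j + 1) = y (i + 1) ∧ M.before j + t < M.before (j + 1) := by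
      rintro ⟨j, h1, h2, h3⟩
      have := M.before_local h1 h2
      omega
    simp only [code]
    rw [dif_neg hh]

/-- The kernel of `code`, recorded as a self-map of its finite index set. -/
noncomputable def state : Option (A × A × Fin (S * K)) → Option (A × A × Fin (S * K)) :=
  Function.invFun M.code ∘ M.code

variable {M N}

theorem code_eq_iff (h : M.state = N.state) (α β) :
    M.code α = M.code β ↔ N.code α = N.code β := by
  have key : ∀ L : MarkedTiling x y S K, L.code α = L.code β ↔ L.state α = L.state β := fun L => by
    constructor
    · intro h
      simp only [state, Function.comp_apply, h]
    · intro h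
      have h' := congrArg L.code h
      simp only [state, Function.comp_apply] at h'
      rwa [Function.invFun_eq (f := L.code) ⟨α, rfl⟩,
        Function.invFun_eq (f := L.code) ⟨β, rfl⟩] at h'
  rw [key M, key N, h]

theorem before_eq (h : M.state = N.state) (i : ℕ) : M.before i = N.before i := by
  induction i with
  | zero => rw [before_zero, before_zero]
  | succ i ih =>
    have key : ∀ t, t < S * K →
        (M.before i + t < M.before (i + 1) ↔ N.before i + t < N.before (i + 1)) := fun t ht => by
      have h1 := M.code_eq_none_iff i ⟨t, ht⟩
      have h2 := N.code_eq_none_iff i ⟨t, ht⟩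
      exact not_iff_not.1 (h1.symm.trans ((code_eq_iff h _ _).trans h2))
    have h1 := M.before_succ_le i
    have h2 := N.before_succ_le i
    have h3 := M.before_strictMono (Nat.lt_succ_self i)
    have h4 := N.before_strictMono (Nat.lt_succ_self i)
    rw [Nat.succ_eq_add_one] at h3 h4
    by_contra hne
    rcases Nat.lt_or_gt_of_ne hne with hlt | hlt
    · have := key (M.before (i + 1) - M.before i) (by omega)
      omega
    · have := key (N.before (i + 1) - N.before i) (by omega)
      omega

/-- Two marked tilings with the same state have gap words with the same pattern of equalities. -/
theorem gapWord_transfer (h : M.state = N.state) {m m' : ℕ} (hm : N.gapWord m = N.gapWord m') :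
    M.gapWord m = M.gapWord m' := by
  have key : ∀ m, ∃ α, M.code α = some (M.gapWord m) ∧ N.code α = some (N.gapWord m) := fun m => by
    obtain ⟨i, h1, h2⟩ := exists_between_of_strictMono M.before_zero M.before_strictMono m
    obtain ⟨t, rfl⟩ := Nat.exists_eq_add_of_le h1
    have ht : t < S * K := by have := M.before_succ_le i; omega
    refine ⟨some (y i, y (i + 1), ⟨t, ht⟩), M.code_eq i ⟨t, ht⟩ h2, ?_⟩
    rw [before_eq h] at h2 ⊢
    rw [before_eq h] at h2
    exact N.code_eq i ⟨t, ht⟩ h2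
  obtain ⟨α, h1, h2⟩ := key m
  obtain ⟨β, h3, h4⟩ := key m'
  have := (code_eq_iff h α β).2 (by rw [h2, h4, hm])
  rw [h1, h3] at this
  exact Option.some_injective _ this

/-- If the marks at a coarse scale and at a much finer scale show the same pattern, then the
period of `x` counted in coarse gaps is also a period in fine gaps, and provides a period shorter
than the least one. -/
theorem state_ne (hp : IsLeastPeriod x p) (hle : 2 * S * K * M.h ≤ N.h) : M.state ≠ N.state := by
  intro hst
  obtain ⟨hp0, hper, hmin⟩ := hp
  have hmark : ∀ n, N.Mark (n + p) ↔ N.Mark n := fun n => by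
    constructor <;> refine N.mark_congr _ _ fun t _ => ?_
    · rw [add_right_comm, hper]
    · rw [add_right_comm, hper]
  set ν := Nat.count N.Mark p with hν
  have hcount : ∀ n, Nat.count N.Mark (n + p) = Nat.count N.Mark n + ν := fun n => by
    rw [add_comm n p, Nat.count_add, add_comm]
    congr 1
    simp only [add_comm p, hmark]
  have hlocN : ∀ m, N.loc (m + ν) = N.loc m + p := fun m => by
    rw [← N.loc_count ((hmark _).2 (N.mark_loc m)), hcount]
    congr 2
    exact (Nat.count_nth_of_infinite N.infinite m).symm
  have hν0 : 0 < ν := by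
    rcases Nat.eq_zero_or_pos ν with h | h
    · have := hlocN 0
      rw [h, add_zero] at this
      omega
    · exact h
  have hgapN : ∀ m, N.gapWord (m + ν) = N.gapWord m := fun m => by
    rw [gapWord, gapWord, add_right_comm, hlocN, hlocN, Nat.add_sub_add_right, factorAt_eq_iff]
    intro t _
    rw [add_right_comm, hper]
  have hgapM : ∀ m, M.gapWord (m + ν) = M.gapWord m := fun m => gapWord_transfer hst (hgapN m)
  obtain ⟨q, hq⟩ := Nat.exists_eq_add_of_le
    (M.loc_strictMono.monotone (Nat.zero_le ν))
  have hlocM : ∀ m, M.loc (m + ν) = M.loc m + q := fun m => by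
    induction m with
    | zero => rw [zero_add, hq]
    | succ m ih =>
      have h1 := congrArg List.length (hgapM m)
      rw [gapWord, gapWord, length_factorAt, length_factorAt] at h1
      have h2 := M.loc_strictMono (Nat.lt_succ_self m)
      have h3 := M.loc_strictMono (Nat.lt_succ_self (m + ν))
      have e : m + 1 + ν = m + ν + 1 := by ring
      rw [Nat.succ_eq_add_one] at h2 h3
      rw [e]
      omega
  have hq0 : 0 < q := by
    have := M.loc_strictMono hν0
    omega
  have hxq : ∀ n, M.loc 0 ≤ n → x (n + q) = x n := fun n hn => by
    obtain ⟨m, h1, h2⟩ := exists_between_of_strictMono (f := fun m => M.loc m - M.loc 0)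
      (by simp) (strictMono_nat_of_lt_succ fun m => by
        have h2 := M.loc_strictMono (Nat.lt_succ_self m)
        have h3 := M.loc_strictMono.monotone (Nat.zero_le m)
        rw [Nat.succ_eq_add_one] at h2
        omega) (n - M.loc 0)
    have h3 := M.loc_strictMono.monotone (Nat.zero_le m)
    obtain ⟨t, rfl⟩ := Nat.exists_eq_add_of_le (show M.loc m ≤ n by omega)
    have h4 := hgapM m
    have e : m + ν + 1 = m + 1 + ν := by ring
    rw [gapWord, gapWord, e, hlocM, hlocM, Nat.add_sub_add_right, factorAt_eq_iff] at h4
    rw [add_right_comm]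
    exact h4 t (by omega)
  have h1 := N.loc_add 0 ν
  rw [hlocN] at h1
  have h2 := M.loc_le 0 ν
  rw [zero_add, hq] at h2
  have h3 : q ≤ ν * (2 * S * M.h) := by omega
  have h4 : K * q < K * p := by
    calc K * q ≤ K * (ν * (2 * S * M.h)) := Nat.mul_le_mul_left _ h3
      _ = ν * (2 * S * K * M.h) := by ring
      _ ≤ ν * N.h := Nat.mul_le_mul_left _ hle
      _ < ν * (N.h + 1) := Nat.mul_lt_mul_of_pos_left (Nat.lt_succ_self _) hν0
      _ ≤ K * p := by rw [mul_add K] at h1; omega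
  exact hmin q hq0 (Nat.lt_of_mul_lt_mul_left h4) (period_of_eventually hp0 hper hxq)

/-- Marked tilings at scales growing by factors of at least `2 S K` have distinct states, so there
are at most as many of them as states. -/
theorem lt_card_of_chain [Fintype A] (hp : IsLeastPeriod x p) {n : ℕ}
    (L : Fin n → MarkedTiling x y S K)
    (hL : ∀ i j, i < j → 2 * S * K * (L i).h ≤ (L j).h) :
    n ≤ (Fintype.card A * (Fintype.card A * (S * K)) + 1) ^
      (Fintype.card A * (Fintype.card A * (S * K)) + 1) := by
  classical
  have hinj : Function.Injective fun i => (L i).state := by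
    intro i j hij
    rcases lt_trichotomy i j with h | h | h
    · exact absurd hij (state_ne hp (hL i j h))
    · exact h
    · exact absurd hij.symm (state_ne hp (hL j i h))
  have := Fintype.card_le_of_injective _ hinj
  simpa using this

end MarkedTiling

end Marks

/-! ### Bounding the least period -/

section Bound

variable [Fintype A] [Nonempty A] {σ : A → List A} {y : ℕ → A} {K p : ℕ}

/-- The tiles `σ^(k+1)(c)`, marked by the occurrences in `φ(y)` of the image under `φ` of the
longest of the words `σᵏ(c)`, form a marked tiling as long as this word is shorter than the least
period. -/
theorem exists_markedTiling (hmem : ∀ c e : A, c ∈ σ e) (hy : SeqImage σ y y) (φ : A → B)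
    (hx : LinRec (fun i => φ (y i)) K) (hK : 0 < K) (hp : IsLeastPeriod (fun i => φ (y i)) p)
    {k : ℕ} (hk : mSize (substIter σ k) < p) :
    ∃ M : MarkedTiling (fun i => φ (y i)) y (mSize σ) K, M.h = mSize (substIter σ k) := by
  obtain ⟨b, hb⟩ := exists_length_eq_mSize (substIter σ k)
  obtain ⟨e, -, -, he⟩ := exists_letter hmem hy b 0
  refine ⟨{
    len := fun c => (substIter σ (k + 1) c).length
    pos := tilePos σ y (k + 1)
    h := mSize (substIter σ k)
    Mark := fun n => ∀ t, t < mSize (substIter σ k) → φ (y (n + t)) = φ (y (tilePos σ y k e + t))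
    pos_zero := tilePos_zero _
    pos_succ := tilePos_succ _
    h_pos := one_le_mSize hmem k
    h_le := mSize_le_length_succ hmem k
    len_le := fun c => (length_le_mSize _ c).trans (mSize_succ_le k)
    exists_mark := fun i => ?_
    x_local := fun i i' h1 h2 r hr => ?_
    mark_congr := fun u v huv hu t ht => (huv t ht).symm.trans (hu t ht)
    sep := fun u v hu hv huv => ?_ }, rfl⟩
  · obtain ⟨j, h1, h2, h3⟩ := exists_subtile hmem hy b k i
    rw [hb] at h2
    refine ⟨_, h1, h2, fun t ht => congrArg φ (tile_local hy hy (h3.trans he.symm) ?_)⟩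
    rwa [h3, hb]
  · refine congrArg φ ?_
    rcases Nat.lt_or_ge r (substIter σ (k + 1) (y i)).length with h | h
    · exact tile_local hy hy h1 h
    · obtain ⟨t, rfl⟩ := Nat.exists_eq_add_of_le h
      rw [← add_assoc, ← add_assoc, ← tilePos_succ]
      rw [h1, ← tilePos_succ]
      exact tile_local hy hy h2 (by omega)
  · rcases Nat.lt_or_ge (v - u) p with h | h
    · refine hp.lt_mul hx (i := u) (by omega) h fun t ht => ?_
      have e : u + (v - u) = v := by omega
      rw [e]
      exact (hv t ht).trans (hu t ht).symm
    · exact hk.trans_le (h.trans (Nat.le_mul_of_pos_left _ hK))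

theorem card_le_mSize (hmem : ∀ c e : A, c ∈ σ e) : Fintype.card A ≤ mSize σ := by
  classical
  obtain ⟨b⟩ := ‹Nonempty A›
  have h : (σ b).toFinset = Finset.univ := Finset.eq_univ_iff_forall.2 fun c =>
    List.mem_toFinset.2 (hmem c b)
  rw [← Finset.card_univ, ← h]
  exact (List.toFinset_card_le _).trans (length_le_mSize σ b)

/-- A bound on the least period, obtained by listing the levels `0, s, 2s, …` below it, with a
step `s = 4 |σ| K` that makes the scale grow by a factor `2 |σ| K` at least. -/
theorem le_two_pow (hmem : ∀ c e : A, c ∈ σ e) (h2 : ∀ e, 2 ≤ (σ e).length)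
    (hy : SeqImage σ y y) (φ : A → B) (hx : LinRec (fun i => φ (y i)) K) (hK : 0 < K)
    (hp : IsLeastPeriod (fun i => φ (y i)) p) {n : ℕ}
    (hn : (Fintype.card A * (Fintype.card A * (mSize σ * K)) + 1) ^
      (Fintype.card A * (Fintype.card A * (mSize σ * K)) + 1) ≤ n) :
    p ≤ 2 ^ (mSize σ * (n * (2 * (2 * mSize σ * K)))) := by
  set u := 2 * mSize σ * K with hu
  have hle : p ≤ mSize (substIter σ (n * (2 * u))) := by
    by_contra hcon
    have hex : ∀ j : Fin (n + 1), ∃ M : MarkedTiling (fun i => φ (y i)) y (mSize σ) K,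
        M.h = mSize (substIter σ (j * (2 * u))) := fun j => by
      refine exists_markedTiling hmem hy φ hx hK hp (lt_of_le_of_lt ?_ (not_le.1 hcon))
      exact mSize_mono hmem (Nat.mul_le_mul_right _ (Nat.lt_succ_iff.1 j.2))
    choose L hL using hex
    have := MarkedTiling.lt_card_of_chain hp L fun i j hij => by
      rw [hL, hL, ← hu]
      calc u * mSize (substIter σ (i * (2 * u)))
          ≤ 2 ^ u * mSize (substIter σ (i * (2 * u))) :=
            Nat.mul_le_mul_right _ Nat.lt_two_pow_self.le
        _ ≤ mSize (substIter σ (i * (2 * u) + 2 * u)) := pow_mul_mSize_le hmem h2 _ _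
        _ ≤ mSize (substIter σ (j * (2 * u))) := mSize_mono hmem (by
            have := Nat.mul_le_mul_right (2 * u) (Nat.succ_le_of_lt (Fin.lt_def.1 hij))
            rwa [Nat.succ_eq_add_one, add_mul, one_mul] at this)
    omega
  calc p ≤ mSize (substIter σ (n * (2 * u))) := hle
    _ ≤ mSize σ ^ (n * (2 * u)) := mSize_le_pow _
    _ ≤ (2 ^ mSize σ) ^ (n * (2 * u)) := Nat.pow_le_pow_left Nat.lt_two_pow_self.le _
    _ = 2 ^ (mSize σ * (n * (2 * u))) := (pow_mul _ _ _).symm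

/-- The choice of exponents: the index `m K` at which `w` is longer than the period, where
`2 ^ m` is the bound on the period, is below the stated constant with `K` in place of `K_σ`. -/
theorem index_bound {d S K : ℕ} (hS : 2 ≤ S) (hdS : d ≤ S) (hSK : S ^ 2 ≤ K) :
    S * ((d * (d * (S * K)) + 1) ^ (d * (d * (S * K)) + 1) * (2 * (2 * S * K))) * K + 1 ≤
      (4 * K ^ 3) ^ (S * K ^ 2 + 1) * (K + 1) ^ K ^ 2 := by
  have hK4 : 4 ≤ K := by nlinarith
  have hE : d * (d * (S * K)) + 1 ≤ S * K ^ 2 + 1 := by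
    have : d * d ≤ K := (Nat.mul_le_mul hdS hdS).trans (by rw [← sq]; exact hSK)
    calc d * (d * (S * K)) + 1 = d * d * (S * K) + 1 := by ring
      _ ≤ K * (S * K) + 1 := by gcongr
      _ = S * K ^ 2 + 1 := by ring
  have hSK' : S ≤ K := by nlinarith
  have hF : S * K ^ 2 + 1 ≤ 4 * K ^ 3 := by
    have : S * K ^ 2 ≤ K * K ^ 2 := Nat.mul_le_mul_right _ hSK'
    have h1 : 1 ≤ K ^ 3 := Nat.one_le_pow _ _ (by omega)
    calc S * K ^ 2 + 1 ≤ K * K ^ 2 + 1 := by omega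
      _ ≤ 4 * K ^ 3 := by
          have h3 : K * K ^ 2 = K ^ 3 := by ring
          omega
  set E := d * (d * (S * K)) + 1
  have hN : E ^ E ≤ (4 * K ^ 3) ^ (S * K ^ 2 + 1) :=
    (Nat.pow_le_pow_left (hE.trans hF) E).trans (Nat.pow_le_pow_right (by positivity) hE)
  have hN1 : 1 ≤ E ^ E := Nat.one_le_pow _ _ (Nat.succ_pos _)
  have hP : 4 * K ^ 3 + 1 ≤ (K + 1) ^ K ^ 2 :=
    calc 4 * K ^ 3 + 1 ≤ (K + 1) ^ 4 := by
          have : (K + 1) ^ 4 = K ^ 4 + 4 * K ^ 3 + 6 * K ^ 2 + 4 * K + 1 := by ring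
          omega
      _ ≤ (K + 1) ^ K ^ 2 := Nat.pow_le_pow_right (by omega) (by nlinarith)
  calc S * (E ^ E * (2 * (2 * S * K))) * K + 1 = E ^ E * (4 * (S ^ 2 * K ^ 2)) + 1 := by ring
    _ ≤ E ^ E * (4 * (K * K ^ 2)) + E ^ E := by gcongr
    _ = E ^ E * (4 * K ^ 3 + 1) := by ring
    _ ≤ _ := Nat.mul_le_mul hN hP

end Bound

/-- decidability criterion for the HD0L periodicity problem in the
primitive case. Let `σ` be a primitive substitution whose incidence matrix has all
entries strictly positive, prolongable on `a`, `y = σ^ω(a)`, `φ` a coding and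
`x = φ(y)`. With `K = (4K_σ³)^(|σ|K_σ²+1)·(K_σ+1)^(K_σ²)` and the prefixes `w_i` of
`x` as above, `x` is periodic iff `#ℛ_{x,w_i} = 1` for some `i ≤ K`. -/
theorem HD0L_periodicity_criterion {A B : Type*}
    [Fintype A] [DecidableEq A] [Nonempty A]
    (σ : A → List A) (a : A) (hprim : Primitive σ)
    (hpos : ∀ i j : A, 0 < incMatrix σ i j)
    (hprol : Prolongable σ a)
    (y : ℕ → A) (hy0 : y 0 = a) (hyfix : SeqImage σ y y)
    (φ : A → B) (hφ : Function.Surjective φ) :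
    IsPeriodic (fun i => φ (y i)) ↔
      ∃ i : ℕ, ((i + 1 : ℕ) : ℝ) ≤
          (4 * Kconst σ ^ 3) ^ ((mSize σ : ℝ) * Kconst σ ^ 2 + 1) *
            (Kconst σ + 1) ^ (Kconst σ ^ 2) ∧
        (returnWords (fun i => φ (y i)) (wSeq (fun i => φ (y i)) i)).ncard = 1 := by
  have hmem : ∀ c e : A, c ∈ σ e := fun c e => List.count_pos_iff.1 (hpos c e)
  have h2 : ∀ e, 2 ≤ (σ e).length := fun e => by
    obtain ⟨⟨w, hw, ha⟩, -⟩ := hprol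
    rcases eq_or_ne e a with rfl | hne
    · rw [ha, List.length_cons]
      have := List.length_pos_iff.2 hw
      omega
    · have hsub : ({e, a} : Finset A) ⊆ (σ e).toFinset := fun c _ =>
        List.mem_toFinset.2 (hmem c e)
      have := (Finset.card_le_card hsub).trans (List.toFinset_card_le _)
      rwa [Finset.card_pair hne] at this
  set x : ℕ → B := fun i => φ (y i) with hxdef
  have hrec : ∀ N m, ∃ j, m ≤ j ∧ ∀ t, t < N → x (j + t) = x t := fun N m => by
    obtain ⟨j, hj, h⟩ := prefix_recurs hmem h2 hyfix N m
    exact ⟨j, hj, fun t ht => congrArg φ (h t ht)⟩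
  constructor
  · intro hper
    obtain ⟨p, hp⟩ := exists_isLeastPeriod hper
    obtain ⟨K, hKdef⟩ : ∃ K, K = mSize σ ^ 2 * Rconst σ := ⟨_, rfl⟩
    have hS : 2 ≤ mSize σ := (h2 a).trans (length_le_mSize σ a)
    have hR := one_le_Rconst hmem h2 hyfix
    have hSK : mSize σ ^ 2 ≤ K := hKdef ▸ Nat.le_mul_of_pos_right _ hR
    have hK : 0 < K := lt_of_lt_of_le (by positivity) hSK
    have hx : LinRec x K := fun g hg n i => by
      obtain ⟨j, h1, h3, h4⟩ := factor_recurs hmem h2 hyfix hg n i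
      exact ⟨j, h1, hKdef ▸ h3, fun t ht => congrArg φ (h4 t ht)⟩
    have hbound := le_two_pow hmem h2 hyfix φ hx hK hp le_rfl
    have hindex := index_bound hS (card_le_mSize hmem) hSK
    generalize mSize σ * ((Fintype.card A * (Fintype.card A * (mSize σ * K)) + 1) ^
      (Fintype.card A * (Fintype.card A * (mSize σ * K)) + 1) * (2 * (2 * mSize σ * K))) = m
      at hbound hindex
    refine ⟨m * K, ?_, ?_⟩
    · have hKK : (K : ℝ) ≤ Kconst σ := by
        have hQ : (mSize σ : ℝ) ≤ Qconst σ := le_max_right _ _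
        rw [hKdef, Kconst]
        push_cast
        calc (mSize σ : ℝ) ^ 2 * Rconst σ = mSize σ * Rconst σ * mSize σ := by ring
          _ ≤ Qconst σ * Rconst σ * mSize σ := by gcongr
      have hK1 : (1 : ℝ) ≤ K := by exact_mod_cast hK
      have hK0 : 0 < Kconst σ := by linarith
      have hcast : ((m * K + 1 : ℕ) : ℝ) ≤
          (4 * (K : ℝ) ^ 3) ^ (mSize σ * K ^ 2 + 1) * ((K : ℝ) + 1) ^ K ^ 2 := by
        exact_mod_cast hindex
      refine hcast.trans (mul_le_mul ?_ ?_ (by positivity) (by positivity))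
      · rw [← Real.rpow_natCast]
        push_cast
        refine (Real.rpow_le_rpow (by positivity) (by gcongr) (by positivity)).trans
          (Real.rpow_le_rpow_of_exponent_le ?_ (by gcongr))
        have : (1 : ℝ) ≤ Kconst σ ^ 3 := one_le_pow₀ (hK1.trans hKK)
        linarith
      · rw [← Real.rpow_natCast]
        push_cast
        refine (Real.rpow_le_rpow (by positivity) (by gcongr) (by positivity)).trans
          (Real.rpow_le_rpow_of_exponent_le ?_ (by gcongr))
        linarith
    · have hlen : p ≤ (wSeq x (m * K)).length := by
        rcases wSeq_length hrec hK hx hp m with h | h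
        · exact h
        · exact hbound.trans h
      rw [wSeq_eq_length hrec (m * K), returnWords_of_le hp hlen, Set.ncard_singleton]
  · rintro ⟨i, -, hi⟩
    rw [wSeq_eq_length hrec i] at hi
    exact periodic_of_ncard hrec hi

end Rauzy
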